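/- arXiv:1511.04957 — 6 statements merged into one kernel-verified Lean document; each statement's English description precedes it below -/
import Mathlib

section
/- Let F be a field of characteristic zero, let n ≥ 1, and let R = F[x_1,…,x_n]. The n-ary Nambu bracket {f_1,…,f_n} = det(∂f_j/∂x_i)_{i,j=1}^n satisfies the Filippov–Jacobi identity: for all a_1,…,a_{n-1}, b_1,…,b_n in R, {a_1,…,a_{n-1}, {b_1,…,b_n}} = Σ_{i=1}^n {b_1,…,b_{i-1}, {a_1,…,a_{n-1}, b_i}, b_{i+1},…,b_n}. In particular, R with the Nambu bracket is an n-Lie (Filippov) algebra. -/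
open MvPolynomial

/-- The n-ary Nambu bracket on F[x_1,…,x_n]:
`{f_1,…,f_n} = det(∂f_j/∂x_i)`. -/
noncomputable def nambuBracket (F : Type*) [Field F] (n : ℕ)
    (f : Fin n → MvPolynomial (Fin n) F) : MvPolynomial (Fin n) F :=
  (Matrix.of fun i j => pderiv i (f j)).det

section Derivation

variable {R A ι : Type*} [CommRing R] [CommRing A] [Algebra R A] [DecidableEq ι]

/-- Leibniz rule for finite products. -/
theorem Derivation.leibniz_finset_prod (D : Derivation R A A) (s : Finset ι) (f : ι → A) :
    D (∏ i ∈ s, f i) = ∑ i ∈ s, D (f i) * ∏ j ∈ s.erase i, f j := by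
  induction s using Finset.induction_on with
  | empty => simp
  | insert a s ha ih =>
    rw [Finset.prod_insert ha, Derivation.leibniz, ih, Finset.sum_insert ha,
      Finset.erase_insert ha, smul_eq_mul, smul_eq_mul, add_comm, mul_comm (∏ i ∈ s, f i),
      Finset.mul_sum]
    congr 1
    refine Finset.sum_congr rfl fun i hi => ?_
    have hai : a ≠ i := fun h => ha (h ▸ hi)
    rw [Finset.erase_insert_of_ne hai,
      Finset.prod_insert fun h => ha (Finset.mem_of_mem_erase h)]
    ring

/-- A derivation is applied to a determinant column by column. -/
theorem Derivation.map_det [Fintype ι] (D : Derivation R A A) (M : Matrix ι ι A) :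
    D M.det = ∑ j, (M.updateCol j fun k => D (M k j)).det := by
  simp only [Matrix.det_apply, map_sum]
  rw [Finset.sum_comm]
  refine Finset.sum_congr rfl fun τ _ => ?_
  rw [Units.smul_def, Derivation.map_smul_of_tower, D.leibniz_finset_prod, ← Finset.smul_sum,
    ← Units.smul_def]
  congr 1
  refine Finset.sum_congr rfl fun j _ => ?_
  rw [← Finset.mul_prod_erase _ _ (Finset.mem_univ j), Matrix.updateCol_self]
  congr 1
  refine Finset.prod_congr rfl fun i hi => ?_
  rw [Matrix.updateCol_ne (Finset.ne_of_mem_erase hi)]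

end Derivation

namespace Matrix

variable {A ι : Type*} [CommRing A] [Fintype ι] [DecidableEq ι]

/-- Letting `M` act on the columns of `B` one at a time multiplies `det B` by the trace of `M`. -/
theorem sum_det_updateCol_mulVec (M B : Matrix ι ι A) :
    ∑ i, (B.updateCol i (M *ᵥ fun k => B k i)).det = M.trace * B.det := by
  have h : ∀ i, (B.updateCol i (M *ᵥ fun k => B k i)).det = (B.adjugate * (M * B)) i i := by
    intro i
    rw [← cramer_apply, cramer_eq_adjugate_mulVec]
    rfl
  simp_rw [h]
  change (B.adjugate * (M * B)).trace = _
  rw [trace_mul_comm, mul_assoc, mul_adjugate, Matrix.mul_smul, mul_one, trace_smul,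
    smul_eq_mul, mul_comm]

/-- Expansion of a determinant linearly in one column. -/
theorem det_updateCol_eq_sum (M : Matrix ι ι A) (j : ι) (v : ι → A) :
    (M.updateCol j v).det = ∑ k, v k * (M.updateCol j (Pi.single k 1)).det := by
  simp_rw [← cramer_apply]
  conv_lhs => rw [pi_eq_sum_univ' v]
  simp [map_sum, Finset.sum_apply]

/-- Exchanging the contents of two columns changes the sign of the determinant. -/
theorem det_updateCol_updateCol_swap (M : Matrix ι ι A) {i j : ι} (hij : i ≠ j) (u v : ι → A) :
    ((M.updateCol i u).updateCol j v).det = -((M.updateCol i v).updateCol j u).det := by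
  have h : ((M.updateCol i u).updateCol j v) =
      ((M.updateCol i v).updateCol j u).submatrix id (Equiv.swap i j) := by
    ext k l
    by_cases hi : l = i
    · subst hi; simp [hij]
    by_cases hj : l = j
    · subst hj; simp [hij]
    simp [hi, hj, Equiv.swap_apply_of_ne_of_ne hi hj]
  rw [h, det_permute', Equiv.Perm.sign_swap hij]
  simp

end Matrix

namespace MvPolynomial

variable {F σ : Type*}

theorem pderiv_pderiv_comm [CommRing F] (i j : σ) (p : MvPolynomial σ F) :
    pderiv i (pderiv j p) = pderiv j (pderiv i p) := by
  classical
  have h : ⁅(pderiv i : Derivation F (MvPolynomial σ F) (MvPolynomial σ F)),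
      (pderiv j : Derivation F (MvPolynomial σ F) (MvPolynomial σ F))⁆ = 0 := by
    refine derivation_ext fun k => ?_
    simp [Derivation.commutator_apply, pderiv_X, Pi.single_apply, apply_ite]
  have := Derivation.congr_fun h p
  rwa [Derivation.commutator_apply, Derivation.zero_apply, sub_eq_zero] at this

/-- The cofactors along a column of a Jacobian matrix form a divergence-free vector field. -/
theorem sum_pderiv_cofactor_jacobian [Field F] [CharZero F] [Fintype σ] [DecidableEq σ]
    (a : σ → MvPolynomial σ F) (m : σ) :
    ∑ k, pderiv k
      ((Matrix.of fun i j => pderiv i (a j)).updateCol m (Pi.single k 1)).det = 0 := by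
  set J : Matrix σ σ (MvPolynomial σ F) := Matrix.of fun i j => pderiv i (a j) with hJ
  simp_rw [Derivation.map_det]
  rw [Finset.sum_comm]
  refine Finset.sum_eq_zero fun j _ => ?_
  by_cases hj : j = m
  · subst hj
    refine Finset.sum_eq_zero fun k _ => Matrix.det_eq_zero_of_column_eq_zero j fun l => ?_
    by_cases hl : l = k <;> simp [Pi.single_apply, hl]
  · have hcol : ∀ k, (fun l => pderiv k ((J.updateCol m (Pi.single k 1)) l j)) =
        fun l => pderiv k (pderiv l (a j)) := fun k => by
      ext1 l
      rw [Matrix.updateCol_ne hj, hJ, Matrix.of_apply]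
    simp_rw [hcol, Matrix.det_updateCol_eq_sum _ j fun l => pderiv _ (pderiv l (a j))]
    rw [← self_eq_neg, ← Finset.sum_neg_distrib]
    conv_lhs => rw [Finset.sum_comm]
    refine Finset.sum_congr rfl fun k _ => ?_
    rw [← Finset.sum_neg_distrib]
    refine Finset.sum_congr rfl fun l _ => ?_
    rw [pderiv_pderiv_comm, Matrix.det_updateCol_updateCol_swap _ (Ne.symm hj), mul_neg]

/-- A divergence-free vector field acts on a Jacobian determinant by acting on each of the
functions in turn. -/
theorem apply_det_jacobian_of_divergence_eq_zero [CommRing F] [Fintype σ] [DecidableEq σ]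
    (D : Derivation F (MvPolynomial σ F) (MvPolynomial σ F)) (c : σ → MvPolynomial σ F)
    (hD : ∀ g, D g = ∑ k, c k * pderiv k g) (hc : ∑ k, pderiv k (c k) = 0)
    (b : σ → MvPolynomial σ F) :
    D (Matrix.of fun i j => pderiv i (b j)).det =
      ∑ i, ((Matrix.of fun i j => pderiv i (b j)).updateCol i
        fun k => pderiv k (D (b i))).det := by
  set B : Matrix σ σ (MvPolynomial σ F) := Matrix.of fun i j => pderiv i (b j) with hB
  let M : Matrix σ σ (MvPolynomial σ F) := Matrix.of fun k l => pderiv k (c l)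
  have hcol : ∀ i, (fun k => pderiv k (D (b i))) =
      (fun k => D (B k i)) + M.mulVec fun k => B k i := fun i => by
    ext1 k
    rw [Pi.add_apply, hD, hD, map_sum, Matrix.mulVec_eq_sum, Finset.sum_apply,
      ← Finset.sum_add_distrib]
    refine Finset.sum_congr rfl fun l _ => ?_
    rw [pderiv_mul, add_comm]
    simp only [hB, M, Matrix.of_apply, Pi.smul_apply, Matrix.transpose_apply, op_smul_eq_mul]
    rw [pderiv_pderiv_comm]
  have htrace : M.trace = 0 := hc
  simp_rw [hcol, Matrix.det_updateCol_add]
  rw [Finset.sum_add_distrib, Matrix.sum_det_updateCol_mulVec, htrace, zero_mul, add_zero,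
    ← Derivation.map_det]

end MvPolynomial

theorem nambuBracket_update (F : Type*) [Field F] (n : ℕ)
    (a : Fin n → MvPolynomial (Fin n) F) (m : Fin n) (g : MvPolynomial (Fin n) F) :
    nambuBracket F n (Function.update a m g) =
      ((Matrix.of fun i j => pderiv i (a j)).updateCol m fun k => pderiv k g).det := by
  unfold nambuBracket
  congr 1
  ext1 i j
  by_cases h : j = m
  · subst h; simp
  · simp [h]

/-- The Nambu bracket satisfies the Filippov–Jacobi identity:
`{a_1,…,a_{n-1}, {b_1,…,b_n}} = Σ_i {b_1,…, {a_1,…,a_{n-1}, b_i}, …, b_n}`.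
Here `{a_1,…,a_{n-1}, x}` is encoded by updating the last slot of `a` to `x`. -/
theorem nambuBracket_filippov (F : Type*) [Field F] [CharZero F]
    (n : ℕ) (hn : 1 ≤ n)
    (a b : Fin n → MvPolynomial (Fin n) F) :
    nambuBracket F n (Function.update a ⟨n - 1, by omega⟩ (nambuBracket F n b)) =
      ∑ i : Fin n, nambuBracket F n (Function.update b i
        (nambuBracket F n (Function.update a ⟨n - 1, by omega⟩ (b i)))) := by
  generalize (⟨n - 1, by omega⟩ : Fin n) = m
  let c : Fin n → MvPolynomial (Fin n) F := fun k =>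
    ((Matrix.of fun i j => pderiv i (a j)).updateCol m (Pi.single k 1)).det
  let D : Derivation F (MvPolynomial (Fin n) F) (MvPolynomial (Fin n) F) := ∑ k, c k • pderiv k
  have hD_apply : ∀ g, D g = ∑ k, c k * pderiv k g := fun g => by
    simp only [D, ← Derivation.coeFnAddMonoidHom_apply, map_sum, Finset.sum_apply]
    simp [Derivation.coeFnAddMonoidHom_apply]
  have hD : ∀ g, nambuBracket F n (Function.update a m g) = D g := fun g => by
    rw [nambuBracket_update, Matrix.det_updateCol_eq_sum, hD_apply]
    exact Finset.sum_congr rfl fun k _ => mul_comm _ _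
  simp_rw [hD, nambuBracket_update]
  exact apply_det_jacobian_of_divergence_eq_zero D c hD_apply
    (sum_pderiv_cofactor_jacobian a m) b
end

section
/- Let F be a field of characteristic zero, let n ≥ 2, and let R = F[x_1,…,x_{n-1}]. The n-ary Dzhumadildaev bracket {f_1,…,f_n} = det M (with M the n×n matrix whose first row is (f_1,…,f_n) and whose (i+1)-th row is (∂f_1/∂x_i,…,∂f_n/∂x_i)) satisfies the generalized Leibniz rule in its last argument: for all f_1,…,f_{n-1}, g, h in R, {f_1,…,f_{n-1}, g·h} = {f_1,…,f_{n-1}, g}·h + g·{f_1,…,f_{n-1}, h} − {f_1,…,f_{n-1}, 1}·g·h. -/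
open MvPolynomial

/-- The n-ary Dzhumadildaev bracket on F[x_1,…,x_{n-1}]:
`{f_1,…,f_n} = det M`, where the first row of `M` is `(f_1,…,f_n)` and the
`(i+1)`-th row is `(∂f_1/∂x_i,…,∂f_n/∂x_i)`. -/
noncomputable def dzhumaBracket (F : Type*) [Field F] (n : ℕ)
    (f : Fin n → MvPolynomial (Fin (n - 1)) F) : MvPolynomial (Fin (n - 1)) F :=
  (Matrix.of fun i j : Fin n =>
    if h : (i : ℕ) = 0 then f j
    else pderiv (⟨(i : ℕ) - 1, by omega⟩ : Fin (n - 1)) (f j)).det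

/-- The column of the Dzhumadildaev matrix attached to `p`: the polynomial followed by its
partial derivatives. -/
noncomputable def dzhumaColumn {F : Type*} [Field F] {n : ℕ}
    (p : MvPolynomial (Fin (n - 1)) F) : Fin n → MvPolynomial (Fin (n - 1)) F :=
  fun i => if h : (i : ℕ) = 0 then p
    else pderiv (⟨(i : ℕ) - 1, by omega⟩ : Fin (n - 1)) p

theorem dzhumaColumn_mul {F : Type*} [Field F] {n : ℕ} (g h : MvPolynomial (Fin (n - 1)) F) :
    (dzhumaColumn (g * h) : Fin n → _) =
      h • dzhumaColumn g + g • dzhumaColumn h + (-(g * h)) • dzhumaColumn 1 := by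
  funext i
  by_cases hi : (i : ℕ) = 0
  · simp only [dzhumaColumn, hi, dite_true, Pi.add_apply, Pi.smul_apply, smul_eq_mul]
    ring
  · simp only [dzhumaColumn, hi, dite_false, Pi.add_apply, Pi.smul_apply, smul_eq_mul,
      Derivation.leibniz, pderiv_one]
    ring

theorem dzhumaBracket_update {F : Type*} [Field F] {n : ℕ}
    (f : Fin n → MvPolynomial (Fin (n - 1)) F) (k : Fin n) (p : MvPolynomial (Fin (n - 1)) F) :
    dzhumaBracket F n (Function.update f k p) =
      ((Matrix.of fun i j => dzhumaColumn (f j) i).updateCol k (dzhumaColumn p)).det := by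
  unfold dzhumaBracket
  congr 1
  ext1 i j
  by_cases hj : j = k
  · subst hj
    simp [dzhumaColumn]
  · simp [dzhumaColumn, hj]

/-- The Dzhumadildaev bracket satisfies the generalized Leibniz rule in its
last argument:
`{f_1,…,f_{n-1}, g·h} = {f_1,…,f_{n-1}, g}·h + g·{f_1,…,f_{n-1}, h}
  − {f_1,…,f_{n-1}, 1}·g·h`. -/
theorem dzhumaBracket_genLeibniz (F : Type*) [Field F] [CharZero F]
    (n : ℕ) (hn : 2 ≤ n)
    (f : Fin n → MvPolynomial (Fin (n - 1)) F) (g h : MvPolynomial (Fin (n - 1)) F) :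
    dzhumaBracket F n (Function.update f ⟨n - 1, by omega⟩ (g * h)) =
      dzhumaBracket F n (Function.update f ⟨n - 1, by omega⟩ g) * h +
        g * dzhumaBracket F n (Function.update f ⟨n - 1, by omega⟩ h) -
        dzhumaBracket F n (Function.update f ⟨n - 1, by omega⟩ 1) * g * h := by
  simp only [dzhumaBracket_update, dzhumaColumn_mul, Matrix.det_updateCol_add,
    Matrix.det_updateCol_smul]
  ring
end

section
/- Let F be a field of characteristic zero, let n ≥ 2, and let R = F[x_1,…,x_{n-1}]. The n-ary Dzhumadildaev bracket {f_1,…,f_n} = det M (with M the n×n matrix whose first row is (f_1,…,f_n) and whose (i+1)-th row is (∂f_1/∂x_i,…,∂f_n/∂x_i)) satisfies the Filippov–Jacobi identity: for all a_1,…,a_{n-1}, b_1,…,b_n in R, {a_1,…,a_{n-1}, {b_1,…,b_n}} = Σ_{i=1}^n {b_1,…,b_{i-1}, {a_1,…,a_{n-1}, b_i}, b_{i+1},…,b_n}. In particular, R with the Dzhumadildaev bracket is an n-Lie (Filippov) algebra. -/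
open MvPolynomial

open Matrix

/-- A derivation applied to a finite product. -/
theorem Derivation.apply_finset_prod {ι k R : Type*} [DecidableEq ι] [CommRing k] [CommRing R]
    [Algebra k R] (D : Derivation k R R) (s : Finset ι) (f : ι → R) :
    D (∏ j ∈ s, f j) = ∑ j ∈ s, ∏ l ∈ s, Function.update f j (D (f j)) l := by
  induction s using Finset.induction_on with
  | empty => simp
  | insert a s ha ih =>
    have hprod : ∏ l ∈ s, Function.update f a (D (f a)) l = ∏ l ∈ s, f l :=
      Finset.prod_congr rfl fun l hl =>
        Function.update_of_ne (ne_of_mem_of_not_mem hl ha) _ _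
    have hsum : ∑ j ∈ s, ∏ l ∈ insert a s, Function.update f j (D (f j)) l =
        f a * ∑ j ∈ s, ∏ l ∈ s, Function.update f j (D (f j)) l := by
      rw [Finset.mul_sum]
      refine Finset.sum_congr rfl fun j hj => ?_
      rw [Finset.prod_insert ha, Function.update_of_ne (ne_of_mem_of_not_mem hj ha).symm]
    rw [Finset.prod_insert ha, Derivation.leibniz, Finset.sum_insert ha, hsum,
      Finset.prod_insert ha, hprod, ih, Function.update_self, smul_eq_mul, smul_eq_mul]
    ring

section Determinant

variable {ι k R : Type*} [Fintype ι] [DecidableEq ι] [CommRing k] [CommRing R] [Algebra k R]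

/-- A derivation applied to a determinant, column by column. -/
theorem Derivation.apply_det_eq_sum_updateCol (D : Derivation k R R) (M : Matrix ι ι R) :
    D M.det = ∑ j, (M.updateCol j fun i => D (M i j)).det := by
  simp only [Matrix.det_apply, map_sum]
  rw [Finset.sum_comm]
  refine Finset.sum_congr rfl fun σ _ => ?_
  rw [← Finset.smul_sum, Units.smul_def, Units.smul_def, map_zsmul, D.apply_finset_prod]
  congr 1
  refine Finset.sum_congr rfl fun j _ => Finset.prod_congr rfl fun l _ => ?_
  by_cases h : l = j
  · subst h; simp
  · simp [h]

/-- A derivation applied to a determinant, row by row. -/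
theorem Derivation.apply_det_eq_sum_updateRow (D : Derivation k R R) (M : Matrix ι ι R) :
    D M.det = ∑ i, (M.updateRow i fun j => D (M i j)).det := by
  rw [← Matrix.det_transpose, D.apply_det_eq_sum_updateCol]
  refine Finset.sum_congr rfl fun i _ => ?_
  rw [← Matrix.det_transpose, Matrix.updateCol_transpose, Matrix.transpose_transpose]
  rfl

/-- Letting `N` act on one column of `M` at a time multiplies the determinant by `N.trace`. -/
theorem Matrix.sum_det_updateCol_mulVec_s5 (N M : Matrix ι ι R) :
    ∑ j, (M.updateCol j (N *ᵥ fun i => M i j)).det = N.trace * M.det := by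
  have h : ∀ j, (M.updateCol j (N *ᵥ fun i => M i j)).det = (M.adjugate * (N * M)) j j := by
    intro j
    rw [← Matrix.cramer_apply, Matrix.cramer_eq_adjugate_mulVec]
    rfl
  calc ∑ j, (M.updateCol j (N *ᵥ fun i => M i j)).det
      = (M.adjugate * (N * M)).trace := Finset.sum_congr rfl fun j _ => h j
    _ = N.trace * M.det := by
      rw [Matrix.trace_mul_comm, Matrix.mul_assoc, Matrix.mul_adjugate, Matrix.mul_smul,
        Matrix.mul_one, Matrix.trace_smul, smul_eq_mul, mul_comm]

/-- Moving a row from position `r` to position `i` while `u` moves from `i` to `r` changes the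
sign of the determinant. -/
theorem Matrix.det_updateRow_updateRow_swap (M : Matrix ι ι R) {i r : ι} (h : i ≠ r)
    (u v : ι → R) :
    ((M.updateRow i u).updateRow r v).det = -((M.updateRow r u).updateRow i v).det := by
  have hperm : (M.updateRow i u).updateRow r v =
      ((M.updateRow r u).updateRow i v).submatrix (Equiv.swap i r) id := by
    ext s t
    by_cases hi : s = i
    · subst hi; simp [h, Ne.symm h]
    · by_cases hr : s = r
      · subst hr; simp
      · simp [hi, hr, Equiv.swap_apply_of_ne_of_ne hi hr]
  rw [hperm, Matrix.det_permute, Equiv.Perm.sign_swap h]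
  simp

end Determinant

section AugmentedJacobian

variable {k R : Type*} [CommRing k] [CommRing R] [Algebra k R] {m : ℕ}

/-- The matrix with first row `f` and further rows the derivatives `d i ∘ f`. -/
def augJacobian (d : Fin m → Derivation k R R) (f : Fin (m + 1) → R) :
    Matrix (Fin (m + 1)) (Fin (m + 1)) R :=
  Matrix.of fun i j => Fin.cases (f j) (fun i => d i (f j)) i

@[simp]
theorem augJacobian_zero (d : Fin m → Derivation k R R) (f : Fin (m + 1) → R)
    (j : Fin (m + 1)) : augJacobian d f 0 j = f j := rfl

@[simp]
theorem augJacobian_succ (d : Fin m → Derivation k R R) (f : Fin (m + 1) → R)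
    (i : Fin m) (j : Fin (m + 1)) : augJacobian d f i.succ j = d i (f j) := rfl

theorem augJacobian_update (d : Fin m → Derivation k R R) (f : Fin (m + 1) → R)
    (j : Fin (m + 1)) (x : R) :
    augJacobian d (Function.update f j x) =
      (augJacobian d f).updateCol j (Fin.cons x fun i => d i x) := by
  ext i l
  by_cases h : l = j
  · subst h
    refine Fin.cases ?_ (fun i => ?_) i <;> simp
  · refine Fin.cases ?_ (fun i => ?_) i <;> simp [h]

/-- As a function of one argument, the bracket is a first-order differential operator whose
coefficients are cofactors. -/
theorem det_augJacobian_update (d : Fin m → Derivation k R R) (f : Fin (m + 1) → R)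
    (j : Fin (m + 1)) (x : R) :
    (augJacobian d (Function.update f j x)).det =
      (augJacobian d f).adjugate j 0 * x +
        ∑ i : Fin m, (augJacobian d f).adjugate j i.succ * d i x := by
  rw [augJacobian_update, ← Matrix.cramer_apply, Matrix.cramer_eq_adjugate_mulVec]
  simp [Matrix.mulVec, dotProduct, Fin.sum_univ_succ]

/-- The divergence of the cofactors of an augmented Jacobian matrix. -/
theorem sum_derivation_adjugate_augJacobian (d : Fin m → Derivation k R R)
    (hd : ∀ i j x, d i (d j x) = d j (d i x)) (f : Fin (m + 1) → R) (l : Fin (m + 1)) :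
    ∑ i : Fin m, d i ((augJacobian d f).adjugate l i.succ) =
      -(m * (augJacobian d f).adjugate l 0) := by
  set A := augJacobian d f with hA
  set e : Fin (m + 1) → R := Pi.single l 1 with he
  have hde : ∀ i j, d i (e j) = 0 := by
    intro i j
    by_cases h : j = l
    · subst h; simp [he]
    · simp [he, h]
  let T : Fin m → Fin m → R := fun i r =>
    ((A.updateRow i.succ e).updateRow r.succ
      fun j => d i (A.updateRow i.succ e r.succ j)).det
  have hT_self : ∀ i, T i i = 0 := by
    intro i
    refine Matrix.det_eq_zero_of_row_eq_zero i.succ fun j => ?_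
    simp [hde]
  have hT_swap : ∀ i r, T i r + T r i = 0 := by
    intro i r
    by_cases h : i = r
    · subst h; simp [hT_self]
    · have h' : i.succ ≠ r.succ := fun h' => h (Fin.succ_injective _ h')
      simp only [T, Matrix.updateRow_ne h', Matrix.updateRow_ne h'.symm]
      rw [Matrix.det_updateRow_updateRow_swap A h']
      simp [hA, hd i r]
  have hT_sum : ∑ p : Fin m × Fin m, T p.1 p.2 = 0 := by
    refine Finset.sum_involution (fun p _ => p.swap) (fun p _ => hT_swap _ _) ?_
      (fun _ _ => Finset.mem_univ _) (fun _ _ => Prod.swap_swap _)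
    rintro ⟨i, r⟩ - hne heq
    obtain rfl : r = i := congrArg Prod.fst heq
    exact hne (hT_self _)
  have hterm : ∀ i : Fin m, d i (A.adjugate l i.succ) = -A.adjugate l 0 + ∑ r, T i r := by
    intro i
    rw [Matrix.adjugate_apply, (d i).apply_det_eq_sum_updateRow, Fin.sum_univ_succ]
    congr 1
    have h0 : i.succ ≠ 0 := Fin.succ_ne_zero i
    rw [Matrix.det_updateRow_updateRow_swap A h0, Matrix.adjugate_apply]
    congr 2
    ext s t
    by_cases hs : s = i.succ
    · subst hs; simp [hA, h0.symm]
    · simp [hs]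
  rw [Finset.sum_congr rfl fun i _ => hterm i, Finset.sum_add_distrib,
    ← Fintype.sum_prod_type', hT_sum]
  simp

/-- The Filippov–Jacobi identity for the bracket given by commuting derivations. -/
theorem det_augJacobian_filippov (d : Fin m → Derivation k R R)
    (hd : ∀ i j x, d i (d j x) = d j (d i x)) (a b : Fin (m + 1) → R) (l : Fin (m + 1)) :
    (augJacobian d (Function.update a l (augJacobian d b).det)).det =
      ∑ j, (augJacobian d (Function.update b j
        (augJacobian d (Function.update a l (b j))).det)).det := by
  set c := (augJacobian d a).adjugate l with hc
  set M := augJacobian d b with hM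
  let V : Derivation k R R := ∑ i : Fin m, c i.succ • d i
  have hV : ∀ x, V x = ∑ i : Fin m, c i.succ * d i x := by
    intro x
    have h := congrFun (map_sum (Derivation.coeFnAddMonoidHom (R := k) (A := R) (M := R))
      (fun i : Fin m => c i.succ • d i) Finset.univ) x
    rw [Finset.sum_apply] at h
    exact h
  have hD : ∀ x, (augJacobian d (Function.update a l x)).det = c 0 * x + V x := by
    intro x
    rw [det_augJacobian_update, hV]
  let N : Matrix (Fin (m + 1)) (Fin (m + 1)) R :=
    Matrix.of fun i p => Fin.cases 0 (fun i => d i (c p)) i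
  have hN : N.trace = -(m * c 0) := by
    rw [hc, ← sum_derivation_adjugate_augJacobian d hd a l]
    simp [Matrix.trace, Fin.sum_univ_succ, N, hc]
  have hcol : ∀ j, (Fin.cons (c 0 * b j + V (b j)) fun i => d i (c 0 * b j + V (b j))) =
      (c 0 • fun i => M i j) + (fun i => V (M i j)) + N *ᵥ fun i => M i j := by
    intro j
    ext i
    refine Fin.cases ?_ (fun i => ?_) i
    · simp [hM, N, Matrix.mulVec, dotProduct]
    · simp only [hV, hM, N, Matrix.mulVec, dotProduct, Fin.cons_succ, map_add, map_sum,
        Derivation.leibniz, smul_eq_mul, Pi.add_apply, Pi.smul_apply, augJacobian_succ,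
        augJacobian_zero, Matrix.of_apply, Fin.cases_succ, Fin.sum_univ_succ,
        Finset.sum_add_distrib, hd i]
      simp only [mul_comm]
      ring
  have hterm : ∀ j, (augJacobian d (Function.update b j
      (augJacobian d (Function.update a l (b j))).det)).det =
      c 0 * M.det + (M.updateCol j fun i => V (M i j)).det +
        (M.updateCol j (N *ᵥ fun i => M i j)).det := by
    intro j
    rw [hD, augJacobian_update, hcol, Matrix.det_updateCol_add, Matrix.det_updateCol_add,
      Matrix.det_updateCol_smul, Matrix.updateCol_eq_self]
  rw [hD, Finset.sum_congr rfl fun j _ => hterm j, Finset.sum_add_distrib,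
    Finset.sum_add_distrib, ← V.apply_det_eq_sum_updateCol, Matrix.sum_det_updateCol_mulVec_s5, hN]
  simp
  ring

end AugmentedJacobian

theorem MvPolynomial.pderiv_pderiv_comm_s5 {σ R : Type*} [CommRing R] (i j : σ)
    (p : MvPolynomial σ R) : pderiv i (pderiv j p) = pderiv j (pderiv i p) := by
  classical
  have h : ⁅pderiv (R := R) i, pderiv (R := R) j⁆ = 0 := by
    refine MvPolynomial.derivation_ext fun l => ?_
    simp [Derivation.commutator_apply, pderiv_X, Pi.single_apply, apply_ite]
  have hp : ⁅pderiv (R := R) i, pderiv (R := R) j⁆ p = 0 := by rw [h]; rfl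
  rwa [Derivation.commutator_apply, sub_eq_zero] at hp

theorem dzhumaBracket_succ (F : Type*) [Field F] (m : ℕ)
    (f : Fin (m + 1) → MvPolynomial (Fin m) F) :
    dzhumaBracket F (m + 1) f = (augJacobian (fun i : Fin m => pderiv (R := F) i) f).det := by
  unfold dzhumaBracket
  congr 1
  ext1 i j
  refine Fin.cases ?_ (fun i => ?_) i <;> simp

/-- The Dzhumadildaev bracket satisfies the Filippov–Jacobi identity:
`{a_1,…,a_{n-1}, {b_1,…,b_n}} = Σ_i {b_1,…, {a_1,…,a_{n-1}, b_i}, …, b_n}`.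
Here `{a_1,…,a_{n-1}, x}` is encoded by updating the last slot of `a` to `x`. -/
theorem dzhumaBracket_filippov (F : Type*) [Field F] [CharZero F]
    (n : ℕ) (hn : 2 ≤ n)
    (a b : Fin n → MvPolynomial (Fin (n - 1)) F) :
    dzhumaBracket F n (Function.update a ⟨n - 1, by omega⟩ (dzhumaBracket F n b)) =
      ∑ i : Fin n, dzhumaBracket F n (Function.update b i
        (dzhumaBracket F n (Function.update a ⟨n - 1, by omega⟩ (b i)))) := by
  obtain ⟨m, rfl⟩ : ∃ m, n = m + 1 := ⟨n - 1, by omega⟩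
  simp only [dzhumaBracket_succ]
  exact det_augJacobian_filippov _ pderiv_pderiv_comm_s5 a b _
end

section
/- Let A be a commutative unital ring, let n ≥ 1, and let b : A^n → A be an n-ary operation satisfying the generalized Leibniz rule in its last argument: b(f_1,…,f_{n-1}, g·h) = b(f_1,…,f_{n-1}, g)·h + g·b(f_1,…,f_{n-1}, h) − b(f_1,…,f_{n-1}, 1)·g·h for all f_1,…,f_{n-1}, g, h in A. Let φ be an invertible element of A and define the gauge-twisted bracket b^φ(f_1,…,f_n) = φ^{-1}·b(φ·f_1,…,φ·f_n). Then b^φ also satisfies the generalized Leibniz rule in its last argument: b^φ(f_1,…,f_{n-1}, g·h) = b^φ(f_1,…,f_{n-1}, g)·h + g·b^φ(f_1,…,f_{n-1}, h) − b^φ(f_1,…,f_{n-1}, 1)·g·h. -/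
/-- The gauge-twisted bracket `b^φ(f_1,…,f_n) = φ⁻¹·b(φ·f_1,…,φ·f_n)`. -/
def gaugeTwist {A : Type*} [CommRing A] {n : ℕ} (b : (Fin n → A) → A) (φ : Aˣ) :
    (Fin n → A) → A :=
  fun f => (↑φ⁻¹ : A) * b fun i => (φ : A) * f i

/-- If an n-ary operation `b` on a commutative unital ring satisfies the
generalized Leibniz rule in its last argument, then so does the gauge-twisted
bracket `b^φ` for any invertible `φ`. -/
theorem gaugeTwist_genLeibniz (A : Type*) [CommRing A] (n : ℕ) (hn : 1 ≤ n)
    (b : (Fin n → A) → A) (φ : Aˣ)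
    (hb : ∀ (f : Fin n → A) (g h : A),
      b (Function.update f ⟨n - 1, by omega⟩ (g * h)) =
        b (Function.update f ⟨n - 1, by omega⟩ g) * h +
          g * b (Function.update f ⟨n - 1, by omega⟩ h) -
          b (Function.update f ⟨n - 1, by omega⟩ 1) * g * h) :
    ∀ (f : Fin n → A) (g h : A),
      gaugeTwist b φ (Function.update f ⟨n - 1, by omega⟩ (g * h)) =
        gaugeTwist b φ (Function.update f ⟨n - 1, by omega⟩ g) * h +
          g * gaugeTwist b φ (Function.update f ⟨n - 1, by omega⟩ h) -
          gaugeTwist b φ (Function.update f ⟨n - 1, by omega⟩ 1) * g * h := by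
  intro f g h
  have twist_update (x : A) :
      gaugeTwist b φ (Function.update f ⟨n - 1, by omega⟩ x) =
        (↑φ⁻¹ : A) *
          b (Function.update (fun i => (φ : A) * f i) ⟨n - 1, by omega⟩ ((φ : A) * x)) := by
    unfold gaugeTwist
    congr 2
    funext i
    exact Function.apply_update (fun _ y => (φ : A) * y) f _ x i
  have leibniz_left := hb (fun i => (φ : A) * f i) (φ * g) h
  have leibniz_right := hb (fun i => (φ : A) * f i) φ h
  rw [twist_update, twist_update, twist_update, twist_update, ← mul_assoc (φ : A) g h, mul_one]
  linear_combination (↑φ⁻¹ : A) * leibniz_left - (↑φ⁻¹ : A) * g * leibniz_right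
end

section
/- Let F be a field of characteristic zero, let A be a commutative unital F-algebra, and let n ≥ 1. Suppose b : A^n → A is F-multilinear, alternating (it vanishes whenever two arguments coincide), satisfies the Filippov–Jacobi identity b(a_1,…,a_{n-1}, b(c_1,…,c_n)) = Σ_{i=1}^n b(c_1,…,b(a_1,…,a_{n-1},c_i),…,c_n), and satisfies the generalized Leibniz rule b(f_1,…,f_{n-1}, g·h) = b(f_1,…,f_{n-1}, g)·h + g·b(f_1,…,f_{n-1}, h) − b(f_1,…,f_{n-1}, 1)·g·h; that is, (A, b, ·) is a generalized n-Nambu-Poisson algebra. Then for every invertible element φ of A, the gauge-twisted bracket b^φ(f_1,…,f_n) = φ^{-1}·b(φ·f_1,…,φ·f_n) is again F-multilinear, alternating, satisfies the Filippov–Jacobi identity, and satisfies the generalized Leibniz rule; that is, (A, b^φ, ·) is a generalized n-Nambu-Poisson algebra. -/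
theorem gaugeTwist_update {A : Type*} [CommRing A] {n : ℕ} (b : (Fin n → A) → A) (φ : Aˣ)
    (f : Fin n → A) (i : Fin n) (x : A) :
    gaugeTwist b φ (Function.update f i x) =
      (↑φ⁻¹ : A) * b (Function.update (fun j => (φ : A) * f j) i (φ * x)) := by
  unfold gaugeTwist
  congr 2
  ext j
  exact Function.apply_update (fun _ y => (φ : A) * y) f i x j

theorem mul_gaugeTwist {A : Type*} [CommRing A] {n : ℕ} (b : (Fin n → A) → A) (φ : Aˣ)
    (f : Fin n → A) : (φ : A) * gaugeTwist b φ f = b fun i => (φ : A) * f i :=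
  φ.mul_inv_cancel_left _

/-- If `(A, b, ·)` is a generalized n-Nambu-Poisson algebra over a field `F`
of characteristic zero (i.e. `b` is F-multilinear, alternating, satisfies the
Filippov–Jacobi identity and the generalized Leibniz rule), then for any
invertible `φ` the gauge-twisted bracket `b^φ` makes `(A, b^φ, ·)` again a
generalized n-Nambu-Poisson algebra. -/
theorem gaugeTwist_nambuPoisson (F : Type*) [Field F] [CharZero F]
    (A : Type*) [CommRing A] [Algebra F A] (n : ℕ) (hn : 1 ≤ n)
    (b : (Fin n → A) → A) (φ : Aˣ)
    (hadd : ∀ (f : Fin n → A) (i : Fin n) (x y : A),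
      b (Function.update f i (x + y)) =
        b (Function.update f i x) + b (Function.update f i y))
    (hsmul : ∀ (f : Fin n → A) (i : Fin n) (c : F) (x : A),
      b (Function.update f i (c • x)) = c • b (Function.update f i x))
    (halt : ∀ (f : Fin n → A) (i j : Fin n), i ≠ j → f i = f j → b f = 0)
    (hFJ : ∀ a c : Fin n → A,
      b (Function.update a ⟨n - 1, by omega⟩ (b c)) =
        ∑ i : Fin n, b (Function.update c i
          (b (Function.update a ⟨n - 1, by omega⟩ (c i)))))
    (hLeib : ∀ (f : Fin n → A) (g h : A),
      b (Function.update f ⟨n - 1, by omega⟩ (g * h)) =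
        b (Function.update f ⟨n - 1, by omega⟩ g) * h +
          g * b (Function.update f ⟨n - 1, by omega⟩ h) -
          b (Function.update f ⟨n - 1, by omega⟩ 1) * g * h) :
    (∀ (f : Fin n → A) (i : Fin n) (x y : A),
      gaugeTwist b φ (Function.update f i (x + y)) =
        gaugeTwist b φ (Function.update f i x) + gaugeTwist b φ (Function.update f i y)) ∧
    (∀ (f : Fin n → A) (i : Fin n) (c : F) (x : A),
      gaugeTwist b φ (Function.update f i (c • x)) =
        c • gaugeTwist b φ (Function.update f i x)) ∧
    (∀ (f : Fin n → A) (i j : Fin n), i ≠ j → f i = f j → gaugeTwist b φ f = 0) ∧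
    (∀ a c : Fin n → A,
      gaugeTwist b φ (Function.update a ⟨n - 1, by omega⟩ (gaugeTwist b φ c)) =
        ∑ i : Fin n, gaugeTwist b φ (Function.update c i
          (gaugeTwist b φ (Function.update a ⟨n - 1, by omega⟩ (c i))))) ∧
    (∀ (f : Fin n → A) (g h : A),
      gaugeTwist b φ (Function.update f ⟨n - 1, by omega⟩ (g * h)) =
        gaugeTwist b φ (Function.update f ⟨n - 1, by omega⟩ g) * h +
          g * gaugeTwist b φ (Function.update f ⟨n - 1, by omega⟩ h) -
          gaugeTwist b φ (Function.update f ⟨n - 1, by omega⟩ 1) * g * h) := by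
  refine ⟨fun f i x y => ?_, fun f i c x => ?_, fun f i j hij hf => ?_, fun a c => ?_,
    fun f g h => ?_⟩
  · simp only [gaugeTwist_update, mul_add, hadd]
  · simp only [gaugeTwist_update, mul_smul_comm, hsmul]
  · rw [gaugeTwist, halt _ i j hij (congrArg ((φ : A) * ·) hf), mul_zero]
  · rw [gaugeTwist_update, mul_gaugeTwist, hFJ, Finset.mul_sum]
    refine Finset.sum_congr rfl fun i _ => ?_
    rw [gaugeTwist_update, gaugeTwist_update, Units.mul_inv_cancel_left]
  · simp only [gaugeTwist_update, mul_one]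
    rw [← mul_assoc (φ : A) g h, hLeib _ (φ * g) h, hLeib _ φ h]
    ring
end

section
/- Let F be a field of characteristic zero, let n ≥ 1, and let R = F[p_1,…,p_n,q_1,…,q_n,t] be the polynomial ring in 2n+1 variables. Let E = Σ_{i=1}^n (p_i·∂/∂p_i + q_i·∂/∂q_i) be the Euler operator in the variables p_i, q_i, let {f,g}_P = Σ_{i=1}^n (∂f/∂p_i · ∂g/∂q_i − ∂f/∂q_i · ∂g/∂p_i), and define the Lagrange bracket {f,g}_L = {f,g}_P + (2−E)(f)·∂g/∂t − ∂f/∂t·(2−E)(g). Then {·,·}_L is F-bilinear, antisymmetric ({f,g}_L = −{g,f}_L), and satisfies the Jacobi identity {f,{g,h}_L}_L = {{f,g}_L,h}_L + {g,{f,h}_L}_L; i.e., {·,·}_L is a Lie bracket on R. -/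
open MvPolynomial

/-- The Euler operator `E = Σ_i (p_i·∂/∂p_i + q_i·∂/∂q_i)` on
`F[p_1,…,p_n,q_1,…,q_n,t]`, where `p_i` is indexed by `Sum.inl (Sum.inl i)`,
`q_i` by `Sum.inl (Sum.inr i)`, and `t` by `Sum.inr ()`. -/
noncomputable def eulerOp (F : Type*) [Field F] (n : ℕ)
    (f : MvPolynomial ((Fin n ⊕ Fin n) ⊕ Unit) F) :
    MvPolynomial ((Fin n ⊕ Fin n) ⊕ Unit) F :=
  ∑ i : Fin n,
    (X (Sum.inl (Sum.inl i)) * pderiv (Sum.inl (Sum.inl i)) f +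
      X (Sum.inl (Sum.inr i)) * pderiv (Sum.inl (Sum.inr i)) f)

/-- The Poisson part `{f,g}_P = Σ_i (∂f/∂p_i · ∂g/∂q_i − ∂f/∂q_i · ∂g/∂p_i)`. -/
noncomputable def poissonPart (F : Type*) [Field F] (n : ℕ)
    (f g : MvPolynomial ((Fin n ⊕ Fin n) ⊕ Unit) F) :
    MvPolynomial ((Fin n ⊕ Fin n) ⊕ Unit) F :=
  ∑ i : Fin n,
    (pderiv (Sum.inl (Sum.inl i)) f * pderiv (Sum.inl (Sum.inr i)) g -
      pderiv (Sum.inl (Sum.inr i)) f * pderiv (Sum.inl (Sum.inl i)) g)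

/-- The Lagrange bracket
`{f,g}_L = {f,g}_P + (2−E)(f)·∂g/∂t − ∂f/∂t·(2−E)(g)`. -/
noncomputable def lagrangeBracket (F : Type*) [Field F] (n : ℕ)
    (f g : MvPolynomial ((Fin n ⊕ Fin n) ⊕ Unit) F) :
    MvPolynomial ((Fin n ⊕ Fin n) ⊕ Unit) F :=
  poissonPart F n f g +
    (2 * f - eulerOp F n f) * pderiv (Sum.inr ()) g -
    pderiv (Sum.inr ()) f * (2 * g - eulerOp F n g)

section LagrangeBracket

variable {F : Type*} [Field F] {n : ℕ}

local notation "Poly" => MvPolynomial ((Fin n ⊕ Fin n) ⊕ Unit) F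

theorem pderiv_comm_apply {σ R : Type*} [CommRing R] (i j : σ) (f : MvPolynomial σ R) :
    pderiv i (pderiv j f) = pderiv j (pderiv i f) := by
  classical
  have key : ⁅pderiv (R := R) i, pderiv (R := R) j⁆ = 0 := by
    refine MvPolynomial.derivation_ext fun k => ?_
    simp [Derivation.commutator_apply, pderiv_X, Pi.single_apply, apply_ite]
  have := congrArg (fun D => D f) key
  simpa [Derivation.commutator_apply, sub_eq_zero] using this

/-- The Euler operator as a derivation. -/
noncomputable def eulerDerivation (F : Type*) [Field F] (n : ℕ) :
    Derivation F (MvPolynomial ((Fin n ⊕ Fin n) ⊕ Unit) F)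
      (MvPolynomial ((Fin n ⊕ Fin n) ⊕ Unit) F) :=
  ∑ i : Fin n,
    ((X (Sum.inl (Sum.inl i)) : MvPolynomial ((Fin n ⊕ Fin n) ⊕ Unit) F) •
        pderiv (Sum.inl (Sum.inl i)) +
      (X (Sum.inl (Sum.inr i)) : MvPolynomial ((Fin n ⊕ Fin n) ⊕ Unit) F) •
        pderiv (Sum.inl (Sum.inr i)))

/-- The Hamiltonian derivation `{f, ·}_P`. -/
noncomputable def poissonDerivation (f : Poly) : Derivation F Poly Poly :=
  ∑ i : Fin n,
    (pderiv (Sum.inl (Sum.inl i)) f • pderiv (Sum.inl (Sum.inr i)) -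
      pderiv (Sum.inl (Sum.inr i)) f • pderiv (Sum.inl (Sum.inl i)))

theorem Derivation.sum_apply_apply {R A M ι : Type*} [CommSemiring R] [CommSemiring A]
    [AddCommMonoid M] [Algebra R A] [Module A M] [Module R M]
    (s : Finset ι) (D : ι → Derivation R A M) (a : A) :
    (∑ i ∈ s, D i) a = ∑ i ∈ s, D i a := by
  rw [← Derivation.coeFnAddMonoidHom_apply, map_sum, Finset.sum_apply]
  rfl

theorem eulerDerivation_apply (f : Poly) : eulerDerivation F n f = eulerOp F n f := by
  simp [eulerDerivation, eulerOp, Derivation.sum_apply_apply]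

theorem poissonDerivation_apply (f g : Poly) :
    poissonDerivation f g = poissonPart F n f g := by
  simp [poissonDerivation, poissonPart, Derivation.sum_apply_apply]

theorem eulerOp_X_inl (v : Fin n ⊕ Fin n) :
    eulerOp F n (X (Sum.inl v)) = X (Sum.inl v) := by
  classical
  rcases v with j | j <;> simp [eulerOp, pderiv_X, Pi.single_apply]

theorem eulerOp_X_inr (u : Unit) : eulerOp F n (X (Sum.inr u)) = 0 := by
  simp [eulerOp, pderiv_X]

theorem poissonPart_X_inl_inl (f : Poly) (j : Fin n) :
    poissonPart F n f (X (Sum.inl (Sum.inl j))) = -pderiv (Sum.inl (Sum.inr j)) f := by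
  classical
  simp [poissonPart, pderiv_X, Pi.single_apply]

theorem poissonPart_X_inl_inr (f : Poly) (j : Fin n) :
    poissonPart F n f (X (Sum.inl (Sum.inr j))) = pderiv (Sum.inl (Sum.inl j)) f := by
  classical
  simp [poissonPart, pderiv_X, Pi.single_apply]

theorem poissonPart_X_inr (f : Poly) (u : Unit) :
    poissonPart F n f (X (Sum.inr u)) = 0 := by
  simp [poissonPart, pderiv_X]

theorem poissonPart_antisymm (f g : Poly) : poissonPart F n f g = -poissonPart F n g f := by
  simp only [poissonPart, ← Finset.sum_neg_distrib]
  exact Finset.sum_congr rfl fun i _ => by ring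

theorem poissonPart_add_right (f g h : Poly) :
    poissonPart F n f (g + h) = poissonPart F n f g + poissonPart F n f h := by
  simp only [← poissonDerivation_apply, map_add]

theorem poissonPart_sub_right (f g h : Poly) :
    poissonPart F n f (g - h) = poissonPart F n f g - poissonPart F n f h := by
  simp only [← poissonDerivation_apply, map_sub]

theorem poissonPart_neg_right (f g : Poly) :
    poissonPart F n f (-g) = -poissonPart F n f g := by
  simp only [← poissonDerivation_apply, map_neg]

theorem poissonPart_smul_right (c : F) (f g : Poly) :
    poissonPart F n f (c • g) = c • poissonPart F n f g := by
  simp only [← poissonDerivation_apply, Derivation.map_smul]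

theorem poissonPart_mul_right (f g h : Poly) :
    poissonPart F n f (g * h) = g * poissonPart F n f h + h * poissonPart F n f g := by
  simp only [← poissonDerivation_apply, Derivation.leibniz, smul_eq_mul]

theorem eulerOp_add (f g : Poly) : eulerOp F n (f + g) = eulerOp F n f + eulerOp F n g := by
  simp only [← eulerDerivation_apply, map_add]

theorem eulerOp_sub (f g : Poly) : eulerOp F n (f - g) = eulerOp F n f - eulerOp F n g := by
  simp only [← eulerDerivation_apply, map_sub]

theorem eulerOp_smul (c : F) (f : Poly) : eulerOp F n (c • f) = c • eulerOp F n f := by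
  simp only [← eulerDerivation_apply, Derivation.map_smul]

theorem eulerOp_mul (f g : Poly) :
    eulerOp F n (f * g) = f * eulerOp F n g + g * eulerOp F n f := by
  simp only [← eulerDerivation_apply, Derivation.leibniz, smul_eq_mul]

/-- Partial derivatives are derivations of the Poisson part. -/
theorem pderiv_poissonPart (v : (Fin n ⊕ Fin n) ⊕ Unit) (f g : Poly) :
    pderiv v (poissonPart F n f g) =
      poissonPart F n (pderiv v f) g + poissonPart F n f (pderiv v g) := by
  simp only [poissonPart, map_sum, map_sub, pderiv_mul, ← Finset.sum_add_distrib,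
    pderiv_comm_apply v]
  exact Finset.sum_congr rfl fun i _ => by ring

theorem pderiv_inl_eulerOp (v : Fin n ⊕ Fin n) (f : Poly) :
    pderiv (Sum.inl v) (eulerOp F n f) =
      eulerOp F n (pderiv (Sum.inl v) f) + pderiv (Sum.inl v) f := by
  classical
  have key : ⁅(pderiv (Sum.inl v) : Derivation F Poly Poly), eulerDerivation F n⁆ =
      pderiv (Sum.inl v) := by
    refine MvPolynomial.derivation_ext fun k => ?_
    have euler_zero : eulerDerivation F n (pderiv (Sum.inl v) (X k)) = 0 := by
      rw [pderiv_X, Pi.single_apply]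
      split_ifs <;> simp
    rw [Derivation.commutator_apply, euler_zero, sub_zero, eulerDerivation_apply]
    rcases k with k | k
    · rw [eulerOp_X_inl]
    · simp [eulerOp_X_inr, pderiv_X]
  have := congrArg (fun D => D f) key
  simp only [Derivation.commutator_apply, eulerDerivation_apply] at this
  linear_combination this

theorem pderiv_inr_eulerOp (u : Unit) (f : Poly) :
    pderiv (Sum.inr u) (eulerOp F n f) = eulerOp F n (pderiv (Sum.inr u) f) := by
  simp only [eulerOp, map_sum, map_add, pderiv_mul, pderiv_comm_apply (Sum.inr u)]
  simp [pderiv_X]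

theorem eulerOp_poissonPart (f g : Poly) :
    eulerOp F n (poissonPart F n f g) =
      poissonPart F n (eulerOp F n f) g + poissonPart F n f (eulerOp F n g) -
        2 * poissonPart F n f g := by
  have key : ⁅eulerDerivation F n, poissonDerivation f⁆ =
      poissonDerivation (eulerOp F n f) - (2 : Poly) • poissonDerivation f := by
    refine MvPolynomial.derivation_ext fun k => ?_
    rcases k with (k | k) | k <;>
      simp only [Derivation.commutator_apply, Derivation.sub_apply, Derivation.smul_apply,
        eulerDerivation_apply, poissonDerivation_apply, eulerOp_X_inl, eulerOp_X_inr,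
        poissonPart_X_inl_inl, poissonPart_X_inl_inr, poissonPart_X_inr, pderiv_inl_eulerOp,
        smul_eq_mul]
    · rw [← eulerDerivation_apply, map_neg, eulerDerivation_apply]
      ring
    · ring
    · simp [← eulerDerivation_apply, ← poissonDerivation_apply]
  have := congrArg (fun D => D g) key
  simp only [Derivation.commutator_apply, Derivation.sub_apply, Derivation.smul_apply,
    eulerDerivation_apply, poissonDerivation_apply, smul_eq_mul] at this
  linear_combination this

theorem poissonPart_jacobi (f g h : Poly) :
    poissonPart F n f (poissonPart F n g h) =
      poissonPart F n (poissonPart F n f g) h + poissonPart F n g (poissonPart F n f h) := by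
  have key : ⁅poissonDerivation f, poissonDerivation g⁆ =
      poissonDerivation (poissonPart F n f g) := by
    refine MvPolynomial.derivation_ext fun k => ?_
    rcases k with (k | k) | k <;>
      simp only [Derivation.commutator_apply, poissonDerivation_apply,
        poissonPart_X_inl_inl, poissonPart_X_inl_inr, poissonPart_X_inr, pderiv_poissonPart,
        poissonPart_neg_right]
    · rw [poissonPart_antisymm g]
      ring
    · rw [poissonPart_antisymm g]
      ring
    · simp [← poissonDerivation_apply]
  have := congrArg (fun D => D h) key
  simp only [Derivation.commutator_apply, poissonDerivation_apply] at this
  linear_combination this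

theorem lagrangeBracket_antisymm (f g : Poly) :
    lagrangeBracket F n f g = -lagrangeBracket F n g f := by
  simp only [lagrangeBracket, poissonPart_antisymm f g]
  ring

theorem lagrangeBracket_add_right (f g₁ g₂ : Poly) :
    lagrangeBracket F n f (g₁ + g₂) =
      lagrangeBracket F n f g₁ + lagrangeBracket F n f g₂ := by
  simp only [lagrangeBracket, poissonPart_add_right, eulerOp_add, map_add]
  ring

theorem lagrangeBracket_smul_right (c : F) (f g : Poly) :
    lagrangeBracket F n f (c • g) = c • lagrangeBracket F n f g := by
  simp only [lagrangeBracket, poissonPart_smul_right, eulerOp_smul, Derivation.map_smul]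
  simp only [smul_eq_C_mul]
  ring

theorem lagrangeBracket_jacobi (f g h : Poly) :
    lagrangeBracket F n f (lagrangeBracket F n g h) =
      lagrangeBracket F n (lagrangeBracket F n f g) h +
        lagrangeBracket F n g (lagrangeBracket F n f h) := by
  rw [lagrangeBracket_antisymm (lagrangeBracket F n f g) h]
  simp only [lagrangeBracket, two_mul, poissonPart_add_right, poissonPart_sub_right,
    poissonPart_mul_right, eulerOp_add, eulerOp_sub, eulerOp_mul, map_add, map_sub, pderiv_mul,
    pderiv_poissonPart, pderiv_inr_eulerOp, eulerOp_poissonPart]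
  simp only [poissonPart_antisymm h]
  simp only [poissonPart_antisymm _ f, poissonPart_antisymm _ (pderiv _ f),
    poissonPart_antisymm _ (eulerOp F n f)]
  linear_combination poissonPart_jacobi f g h

end LagrangeBracket

/-- The Lagrange bracket is F-bilinear, antisymmetric and satisfies the Jacobi
identity: it is a Lie bracket on `F[p_1,…,p_n,q_1,…,q_n,t]`. -/
theorem lagrangeBracket_lie (F : Type*) [Field F] [CharZero F]
    (n : ℕ) (hn : 1 ≤ n) :
    (∀ f₁ f₂ g : MvPolynomial ((Fin n ⊕ Fin n) ⊕ Unit) F,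
      lagrangeBracket F n (f₁ + f₂) g =
        lagrangeBracket F n f₁ g + lagrangeBracket F n f₂ g) ∧
    (∀ (c : F) (f g : MvPolynomial ((Fin n ⊕ Fin n) ⊕ Unit) F),
      lagrangeBracket F n (c • f) g = c • lagrangeBracket F n f g) ∧
    (∀ f g₁ g₂ : MvPolynomial ((Fin n ⊕ Fin n) ⊕ Unit) F,
      lagrangeBracket F n f (g₁ + g₂) =
        lagrangeBracket F n f g₁ + lagrangeBracket F n f g₂) ∧
    (∀ (c : F) (f g : MvPolynomial ((Fin n ⊕ Fin n) ⊕ Unit) F),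
      lagrangeBracket F n f (c • g) = c • lagrangeBracket F n f g) ∧
    (∀ f g : MvPolynomial ((Fin n ⊕ Fin n) ⊕ Unit) F,
      lagrangeBracket F n f g = - lagrangeBracket F n g f) ∧
    (∀ f g h : MvPolynomial ((Fin n ⊕ Fin n) ⊕ Unit) F,
      lagrangeBracket F n f (lagrangeBracket F n g h) =
        lagrangeBracket F n (lagrangeBracket F n f g) h +
          lagrangeBracket F n g (lagrangeBracket F n f h)) := by
  refine ⟨fun f₁ f₂ g => ?_, fun c f g => ?_, lagrangeBracket_add_right,
    lagrangeBracket_smul_right, lagrangeBracket_antisymm, lagrangeBracket_jacobi⟩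
  · rw [lagrangeBracket_antisymm, lagrangeBracket_add_right, lagrangeBracket_antisymm f₁,
      lagrangeBracket_antisymm f₂, neg_add]
  · rw [lagrangeBracket_antisymm, lagrangeBracket_smul_right, lagrangeBracket_antisymm f,
      smul_neg]
end
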